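/- arXiv:2206.02411 — 8 statements merged into one kernel-verified Lean document; each statement's English description precedes it below -/
import Mathlib

section
/- Let p be a prime, m a positive integer, and j a nonnegative integer with j ≤ val_p(m). Then val_p(C(m, p^j)) = val_p(m) − j. -/
theorem choose_pow_mul_add_pow_sub_one_modEq_one {p : ℕ} (hp : p.Prime) (n j : ℕ) :
    (p ^ j * n + (p ^ j - 1)).choose (p ^ j - 1) ≡ 1 [MOD p] := by
  have : Fact p.Prime := ⟨hp⟩
  have sub_one_div_mod (a : ℕ) (ha : 0 < a) :
      (p * a - 1) % p = p - 1 ∧ (p * a - 1) / p = a - 1 := by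
    obtain ⟨b, rfl⟩ : ∃ b, a = b + 1 := ⟨a - 1, by omega⟩
    have hp0 := hp.pos
    have h : p * (b + 1) - 1 = (p - 1) + p * b := by rw [mul_add]; omega
    rw [h, Nat.add_mul_mod_self_left, Nat.add_mul_div_left _ _ hp0,
      Nat.mod_eq_of_lt (by omega), Nat.div_eq_of_lt (by omega)]
    omega
  induction j with
  | zero => simp [Nat.ModEq]
  | succ j ih =>
    have hpos : 0 < p ^ j := pow_pos hp.pos j
    have hpos' : 0 < p ^ (j + 1) := pow_pos hp.pos _
    have htop : p ^ (j + 1) * n + (p ^ (j + 1) - 1) = p * (p ^ j * n + p ^ j) - 1 := by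
      rw [← Nat.add_sub_assoc hpos']; congr 1; ring
    have hbot : p ^ (j + 1) - 1 = p * p ^ j - 1 := by rw [pow_succ']
    have lucas := Choose.choose_modEq_choose_mod_mul_choose_div_nat (p := p)
      (n := p ^ (j + 1) * n + (p ^ (j + 1) - 1)) (k := p ^ (j + 1) - 1)
    refine lucas.trans ?_
    rw [htop, hbot, (sub_one_div_mod _ (by omega)).1, (sub_one_div_mod _ (by omega)).2,
      (sub_one_div_mod _ hpos).1, (sub_one_div_mod _ hpos).2, Nat.choose_self, one_mul,
      Nat.add_sub_assoc hpos]
    exact ih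

/-- For a prime `p`, a positive integer `m` and `j ≤ val_p(m)`,
one has `val_p(C(m, p^j)) = val_p(m) - j`. -/
theorem stmt1 (p m j : ℕ) (hp : p.Prime) (hm : 0 < m) (hj : j ≤ padicValNat p m) :
    padicValNat p (m.choose (p ^ j)) = padicValNat p m - j := by
  have : Fact p.Prime := ⟨hp⟩
  have hpos : 0 < p ^ j := pow_pos hp.pos j
  have hdvd : p ^ j ∣ m := (pow_dvd_pow p hj).trans pow_padicValNat_dvd
  have hle : p ^ j ≤ m := Nat.le_of_dvd hm hdvd
  have hunit : ¬ p ∣ (m - 1).choose (p ^ j - 1) := by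
    obtain ⟨q, rfl⟩ := hdvd
    obtain ⟨n, rfl⟩ : ∃ n, q = n + 1 := ⟨q - 1, by have := Nat.pos_of_mul_pos_left hm; omega⟩
    have h := choose_pow_mul_add_pow_sub_one_modEq_one hp n j
    rw [← Nat.add_sub_assoc hpos, ← mul_add_one] at h
    intro hd
    exact hp.one_lt.ne' (Nat.dvd_one.1 ((h.dvd_iff dvd_rfl).1 hd))
  have hmul : m * (m - 1).choose (p ^ j - 1) = m.choose (p ^ j) * p ^ j := by
    have h := Nat.add_one_mul_choose_eq (m - 1) (p ^ j - 1)
    rwa [Nat.sub_add_cancel hm, Nat.sub_add_cancel hpos] at h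
  have hval := congrArg (padicValNat p) hmul
  rw [padicValNat.mul hm.ne' (Nat.choose_pos (Nat.sub_le_sub_right hle 1)).ne',
    padicValNat.mul (Nat.choose_pos hle).ne' hpos.ne', padicValNat.prime_pow,
    padicValNat.eq_zero_of_not_dvd hunit] at hval
  omega
end

section
/- Let p be an odd prime, let R be a commutative ring, let x, y ∈ R, and let m, e be positive integers. Then (x + p^e·y)^m − x^m − m·p^e·x^{m−1}·y lies in the ideal of R generated by the element p^{e + val_p(m) + 1}·1. -/
/-- For an odd prime `p` and `2 ≤ k`, the `p`-adic valuation of `k` is at most `k - 2`. -/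
lemma padicValNat_add_two_le {p : ℕ} (hp : p.Prime) (hodd : Odd p) {k : ℕ} (hk : 2 ≤ k) :
    padicValNat p k + 2 ≤ k := by
  have hp3 : 3 ≤ p := by
    have := hp.two_le
    obtain ⟨t, rfl⟩ := hodd
    omega
  have hle : p ^ padicValNat p k ≤ k := Nat.le_of_dvd (by omega) pow_padicValNat_dvd
  rcases Nat.eq_zero_or_pos (padicValNat p k) with h0 | h0
  · omega
  · have hbern : ∀ a : ℕ, 0 < a → a + 2 ≤ 3 ^ a := by
      intro a ha
      induction a, ha using Nat.le_induction with
      | base => norm_num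
      | succ a _ ih => rw [pow_succ]; omega
    exact (hbern _ h0).trans ((Nat.pow_le_pow_left hp3 _).trans hle)

/-- The binomial coefficient `m.choose k` is divisible by `p` to the power
`val_p(m) - val_p(k)`. -/
lemma pow_padicValNat_dvd_pow_mul_choose {p : ℕ} (hp : p.Prime) (m : ℕ) {k : ℕ} (hk : 0 < k) :
    p ^ padicValNat p m ∣ p ^ padicValNat p k * m.choose k := by
  obtain rfl | ⟨n, rfl⟩ : m = 0 ∨ ∃ n, m = n + 1 := by cases m <;> simp
  · simp
  obtain ⟨j, rfl⟩ : ∃ j, k = j + 1 := ⟨k - 1, by omega⟩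
  obtain ⟨c, hpc, hkc⟩ : ∃ c, ¬ p ∣ c ∧ j + 1 = p ^ padicValNat p (j + 1) * c := by
    have := Fact.mk hp
    obtain ⟨c, hc⟩ := pow_padicValNat_dvd (p := p) (n := j + 1)
    refine ⟨c, fun ⟨d, hd⟩ => pow_succ_padicValNat_not_dvd (p := p) hk.ne' ⟨d, ?_⟩, hc⟩
    rw [pow_succ, mul_assoc, ← hd]
    exact hc
  have hdvd : p ^ padicValNat p (n + 1) ∣
      p ^ padicValNat p (j + 1) * (n + 1).choose (j + 1) * c := by
    have h : (n + 1).choose (j + 1) * (j + 1) =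
        p ^ padicValNat p (j + 1) * (n + 1).choose (j + 1) * c := by
      rw [mul_right_comm, ← hkc, mul_comm]
    rw [← h, ← Nat.add_one_mul_choose_eq]
    exact pow_padicValNat_dvd.mul_right _
  exact (Nat.Coprime.pow_left _ ((hp.coprime_iff_not_dvd).2 hpc)).dvd_of_dvd_mul_right hdvd

lemma pow_dvd_choose_mul_pow {p : ℕ} (hp : p.Prime) (hodd : Odd p) (m : ℕ) {e k : ℕ}
    (he : 0 < e) (hk : 2 ≤ k) :
    p ^ (e + padicValNat p m + 1) ∣ m.choose k * p ^ (e * k) := by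
  have hexp : padicValNat p k + (e + 1) ≤ e * k := by
    have := padicValNat_add_two_le hp hodd hk
    obtain ⟨j, rfl⟩ : ∃ j, k = j + 1 := ⟨k - 1, by omega⟩
    have : j ≤ e * j := Nat.le_mul_of_pos_left j he
    rw [mul_add]
    omega
  calc p ^ (e + padicValNat p m + 1)
      = p ^ padicValNat p m * p ^ (e + 1) := by ring
    _ ∣ p ^ padicValNat p k * m.choose k * p ^ (e + 1) :=
        mul_dvd_mul_right (pow_padicValNat_dvd_pow_mul_choose hp m (by omega)) _
    _ = m.choose k * p ^ (padicValNat p k + (e + 1)) := by ring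
    _ ∣ m.choose k * p ^ (e * k) := mul_dvd_mul_left _ (pow_dvd_pow p hexp)


/-- For an odd prime `p`, a commutative ring `R`, `x y : R` and positive integers `m, e`,
the element `(x + p^e y)^m - x^m - m p^e x^(m-1) y` lies in the ideal generated by
`p^(e + val_p(m) + 1)`. -/
theorem stmt2 (p : ℕ) (hp : p.Prime) (hodd : Odd p) {R : Type*} [CommRing R]
    (x y : R) (m e : ℕ) (hm : 0 < m) (he : 0 < e) :
    (x + (p : R) ^ e * y) ^ m - x ^ m - (m : R) * (p : R) ^ e * x ^ (m - 1) * y ∈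
      Ideal.span {(p : R) ^ (e + padicValNat p m + 1)} := by
  obtain ⟨n, rfl⟩ : ∃ n, m = n + 1 := ⟨m - 1, by omega⟩
  have hsum : (x + (p : R) ^ e * y) ^ (n + 1) - x ^ (n + 1) -
      ((n + 1 : ℕ) : R) * (p : R) ^ e * x ^ (n + 1 - 1) * y =
      ∑ k ∈ Finset.range n, ((p : R) ^ e * y) ^ (k + 2) * x ^ (n + 1 - (k + 2)) *
        ((n + 1).choose (k + 2) : R) := by
    rw [add_comm x, add_pow, Finset.sum_range_succ', Finset.sum_range_succ']
    simp
    ring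
  rw [Ideal.mem_span_singleton, hsum]
  refine Finset.dvd_sum fun k _ => ?_
  have h := Nat.cast_dvd_cast (α := R)
    (pow_dvd_choose_mul_pow hp hodd (n + 1) he (Nat.le_add_left 2 k))
  push_cast at h
  rw [mul_pow, ← pow_mul]
  convert h.mul_right (y ^ (k + 2) * x ^ (n + 1 - (k + 2))) using 1
  ring
end

section
/- In the setup below, each of the elements ε_1, …, ε_e is a unit of the ring ℤ_p of p-adic integers. -/
/-- A consequence of Lucas' theorem: the base `p` digits of `p ^ j - 1` are all `p - 1`. -/
theorem Nat.choose_prime_pow_mul_pred_modEq_one {p : ℕ} (hp : p.Prime) {a : ℕ} (ha : 0 < a)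
    (j : ℕ) : (p ^ j * a - 1).choose (p ^ j - 1) ≡ 1 [MOD p] := by
  induction j with
  | zero => simp [Nat.ModEq.refl]
  | succ j ih =>
    have : Fact p.Prime := ⟨hp⟩
    have pred_mod_div : ∀ b, 0 < b → (p * b - 1) % p = p - 1 ∧ (p * b - 1) / p = b - 1 := by
      intro b hb
      obtain ⟨c, rfl⟩ := Nat.exists_eq_add_of_lt hb
      have hpos := hp.pos
      have h : p * (0 + c + 1) - 1 = (p - 1) + p * c := by
        rw [Nat.zero_add, Nat.mul_succ]; omega
      rw [h, Nat.add_mul_mod_self_left, Nat.add_mul_div_left _ _ hpos,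
        Nat.mod_eq_of_lt (by omega), Nat.div_eq_of_lt (by omega)]
      omega
    have lucas := Choose.choose_modEq_choose_mod_mul_choose_div_nat
      (n := p ^ (j + 1) * a - 1) (k := p ^ (j + 1) - 1) (p := p)
    have hj : 0 < p ^ j := pow_pos hp.pos j
    rw [pow_succ', mul_assoc, (pred_mod_div _ (Nat.mul_pos hj ha)).1,
      (pred_mod_div _ (Nat.mul_pos hj ha)).2, (pred_mod_div _ hj).1, (pred_mod_div _ hj).2,
      Nat.choose_self, one_mul] at lucas
    rw [pow_succ', mul_assoc]
    exact lucas.trans ih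

theorem Nat.choose_prime_pow_mul {p : ℕ} (hp : p.Prime) {a : ℕ} (ha : 0 < a) (j : ℕ) :
    (p ^ j * a).choose (p ^ j) = a * (p ^ j * a - 1).choose (p ^ j - 1) := by
  have hj : 0 < p ^ j := pow_pos hp.pos j
  have h := Nat.add_one_mul_choose_eq (p ^ j * a - 1) (p ^ j - 1)
  rw [Nat.sub_add_cancel (Nat.mul_pos hj ha), Nat.sub_add_cancel hj] at h
  apply Nat.eq_of_mul_eq_mul_left hj
  rw [← mul_assoc, h, mul_comm]

theorem Nat.Prime.dvd_choose_prime_pow_of_pow_succ_dvd {p : ℕ} (hp : p.Prime) {n j : ℕ}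
    (h : p ^ (j + 1) ∣ n) : p ∣ n.choose (p ^ j) := by
  obtain ⟨a, rfl⟩ := h
  rcases Nat.eq_zero_or_pos a with rfl | ha
  · simp [Nat.choose_eq_zero_of_lt (pow_pos hp.pos j)]
  · rw [pow_succ, mul_assoc, Nat.choose_prime_pow_mul hp (Nat.mul_pos hp.pos ha), mul_assoc]
    exact dvd_mul_right _ _

theorem PadicInt.isUnit_natCast_of_not_dvd {p : ℕ} [Fact p.Prime] {n : ℕ} (h : ¬ p ∣ n) :
    IsUnit (n : ℤ_[p]) := by
  rw [PadicInt.isUnit_iff]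
  exact PadicInt.norm_natCast_eq_one_iff.2
    (((Fact.out : p.Prime).coprime_iff_not_dvd).2 h)


/-- Let `p` be an odd prime, `m` a positive integer, `1 ≤ e ≤ val_p(m)`, and `δ` a unit of
`ℤ_p`. Suppose `ε : ℕ → ℤ_p` satisfies `p^(val_p(m) - e) * ε 1 = -δ * C(m/p, p^(e-1))` and
`ε (k+1) = -ε k * (1 + C((m - p^e)/p, p^(e-k-1)))` for `1 ≤ k ≤ e - 1`.
Then `ε 1, …, ε e` are all units of `ℤ_p`. -/
theorem stmt5 (p : ℕ) [hp : Fact p.Prime] (hodd : Odd p)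
    (m e : ℕ) (hm : 0 < m) (he1 : 1 ≤ e) (he2 : e ≤ padicValNat p m)
    (δ : ℤ_[p]ˣ) (ε : ℕ → ℤ_[p])
    (hε1 : (p : ℤ_[p]) ^ (padicValNat p m - e) * ε 1 =
      -(δ : ℤ_[p]) * ((m / p).choose (p ^ (e - 1)) : ℤ_[p]))
    (hεrec : ∀ k, 1 ≤ k → k ≤ e - 1 →
      ε (k + 1) = -ε k * (1 + (((m - p ^ e) / p).choose (p ^ (e - k - 1)) : ℤ_[p]))) :
    ∀ k, 1 ≤ k → k ≤ e → IsUnit (ε k) := by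
  have hprime := hp.out
  obtain ⟨f, rfl⟩ : ∃ f, e = f + 1 := ⟨e - 1, by omega⟩
  obtain ⟨d, hd⟩ := Nat.exists_eq_add_of_le he2
  obtain ⟨u, hu⟩ : p ^ padicValNat p m ∣ m := pow_padicValNat_dvd
  have hpu : ¬ p ∣ u := by
    rintro ⟨w, rfl⟩
    exact pow_succ_padicValNat_not_dvd hm.ne' ⟨w, by rw [pow_succ, mul_assoc]; exact hu⟩
  have hupos : 0 < u := Nat.pos_of_ne_zero fun h => hpu (h ▸ dvd_zero p)
  have hmp : m / p = p ^ f * (p ^ d * u) := by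
    rw [hu, hd]
    exact Nat.div_eq_of_eq_mul_right hprime.pos (by ring)
  intro k hk
  induction k, hk using Nat.le_induction with
  | base =>
    intro _
    set c := (p ^ f * (p ^ d * u) - 1).choose (p ^ f - 1) with hc
    have hpc : ¬ p ∣ c := fun h => hprime.one_lt.ne' <| Nat.dvd_one.1 <|
      ((Nat.choose_prime_pow_mul_pred_modEq_one hprime
        (Nat.mul_pos (pow_pos hprime.pos d) hupos) f).dvd_iff dvd_rfl).1 h
    have hε : ε 1 = -(δ : ℤ_[p]) * (u * c) := by
      have hp0 : (p : ℤ_[p]) ^ d ≠ 0 := pow_ne_zero _ (Nat.cast_ne_zero.2 hprime.ne_zero)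
      apply mul_left_cancel₀ hp0
      rw [hd, Nat.add_sub_cancel_left, Nat.add_sub_cancel, hmp, Nat.choose_prime_pow_mul hprime
        (Nat.mul_pos (pow_pos hprime.pos d) hupos), ← hc] at hε1
      rw [hε1]
      push_cast
      ring
    rw [hε]
    exact δ.isUnit.neg.mul ((PadicInt.isUnit_natCast_of_not_dvd hpu).mul
      (PadicInt.isUnit_natCast_of_not_dvd hpc))
  | succ k hk ih =>
    intro hke
    rw [hεrec k hk (by omega)]
    refine (ih (by omega)).neg.mul ?_
    have hdvd : p ^ f ∣ (m - p ^ (f + 1)) / p := by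
      apply Nat.dvd_div_of_mul_dvd
      rw [← pow_succ']
      exact Nat.dvd_sub ((pow_dvd_pow p he2).trans pow_padicValNat_dvd) dvd_rfl
    have hchoose : p ∣ ((m - p ^ (f + 1)) / p).choose (p ^ (f + 1 - k - 1)) :=
      hprime.dvd_choose_prime_pow_of_pow_succ_dvd ((pow_dvd_pow p (by omega)).trans hdvd)
    have hunit : ¬ p ∣ 1 + ((m - p ^ (f + 1)) / p).choose (p ^ (f + 1 - k - 1)) := fun h =>
      hprime.one_lt.ne' <| Nat.dvd_one.1 <| (Nat.dvd_add_left hchoose).1 h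
    exact_mod_cast PadicInt.isUnit_natCast_of_not_dvd hunit
end

section
/- In the setup below, for every integer k with 1 ≤ k ≤ e−1 one has ε_{k+1} ≡ −ε_k (mod p^k), i.e., ε_{k+1} + ε_k lies in the ideal p^k·ℤ_p. -/
/-- If `a ∣ n`, then `a ∣ C(n, r) * r`. -/
theorem dvd_choose_mul_of_dvd {a n r : ℕ} (h : a ∣ n) : a ∣ n.choose r * r := by
  cases r with
  | zero => simp
  | succ r =>
    cases n with
    | zero => simp
    | succ n =>
      rw [← Nat.add_one_mul_choose_eq]
      exact h.mul_right _

/-- If `p ^ (k + j) ∣ n`, then `p ^ k ∣ C(n, p ^ j)`. -/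
theorem pow_dvd_choose_pow {p n k j : ℕ} (hp : 0 < p) (h : p ^ (k + j) ∣ n) :
    p ^ k ∣ n.choose (p ^ j) := by
  refine Nat.dvd_of_mul_dvd_mul_right (pow_pos hp j) ?_
  rw [← pow_add]
  exact dvd_choose_mul_of_dvd h

/-- Let `p` be an odd prime, `m` a positive integer, `1 ≤ e ≤ val_p(m)`, and `δ` a unit of
`ℤ_p`. Suppose `ε : ℕ → ℤ_p` satisfies `p^(val_p(m) - e) * ε 1 = -δ * C(m/p, p^(e-1))` and
`ε (k+1) = -ε k * (1 + C((m - p^e)/p, p^(e-k-1)))` for `1 ≤ k ≤ e - 1`.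
Then for every `1 ≤ k ≤ e - 1` one has `ε (k+1) ≡ -ε k (mod p^k)`. -/
theorem stmt6 (p : ℕ) [hp : Fact p.Prime] (hodd : Odd p)
    (m e : ℕ) (hm : 0 < m) (he1 : 1 ≤ e) (he2 : e ≤ padicValNat p m)
    (δ : ℤ_[p]ˣ) (ε : ℕ → ℤ_[p])
    (hε1 : (p : ℤ_[p]) ^ (padicValNat p m - e) * ε 1 =
      -(δ : ℤ_[p]) * ((m / p).choose (p ^ (e - 1)) : ℤ_[p]))
    (hεrec : ∀ k, 1 ≤ k → k ≤ e - 1 →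
      ε (k + 1) = -ε k * (1 + (((m - p ^ e) / p).choose (p ^ (e - k - 1)) : ℤ_[p]))) :
    ∀ k, 1 ≤ k → k ≤ e - 1 →
      ε (k + 1) + ε k ∈ Ideal.span {(p : ℤ_[p]) ^ k} := by
  intro k hk hke
  have hdiv : p ^ (k + (e - k - 1)) ∣ (m - p ^ e) / p := by
    refine Nat.dvd_div_of_mul_dvd ?_
    rw [← pow_succ', show k + (e - k - 1) + 1 = e by omega]
    exact Nat.dvd_sub ((pow_dvd_pow p he2).trans pow_padicValNat_dvd) dvd_rfl
  have hcast : (p : ℤ_[p]) ^ k ∣ (((m - p ^ e) / p).choose (p ^ (e - k - 1)) : ℤ_[p]) := by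
    exact_mod_cast Nat.cast_dvd_cast (α := ℤ_[p]) (pow_dvd_choose_pow hp.out.pos hdiv)
  rw [Ideal.mem_span_singleton, hεrec k hk hke]
  convert hcast.mul_left (-ε k) using 1
  ring
end

section
/- In the setup below, if in addition val_p(m − p^e) > e, then for every integer k with 1 ≤ k ≤ e−1 one has ε_{k+1} ≡ −ε_k (mod p^{k+1}), i.e., ε_{k+1} + ε_k lies in the ideal p^{k+1}·ℤ_p. -/
/-- If `q ^ (j + c)` divides `n`, then `q ^ c` divides `n.choose (q ^ j)`. -/
theorem pow_dvd_choose_pow_of_pow_add_dvd {q n j c : ℕ} (hq : 0 < q) (h : q ^ (j + c) ∣ n) :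
    q ^ c ∣ n.choose (q ^ j) := by
  have hj : 0 < q ^ j := pow_pos hq j
  rcases n with _ | n
  · rw [Nat.choose_eq_zero_of_lt hj]
    exact dvd_zero _
  · obtain ⟨r, hr⟩ := Nat.exists_eq_succ_of_ne_zero hj.ne'
    have key := Nat.add_one_mul_choose_eq n r
    rw [← Nat.succ_eq_add_one r, ← hr] at key
    refine Nat.dvd_of_mul_dvd_mul_right hj ?_
    rw [← key, ← pow_add, add_comm c j]
    exact h.mul_right _

/-- Let `p` be an odd prime, `m` a positive integer, `1 ≤ e ≤ val_p(m)`, and `δ` a unit of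
`ℤ_p`. Suppose `ε : ℕ → ℤ_p` satisfies `p^(val_p(m) - e) * ε 1 = -δ * C(m/p, p^(e-1))` and
`ε (k+1) = -ε k * (1 + C((m - p^e)/p, p^(e-k-1)))` for `1 ≤ k ≤ e - 1`.
If moreover `m > p^e` and `val_p(m - p^e) > e`, then for every `1 ≤ k ≤ e - 1` one has
`ε (k+1) ≡ -ε k (mod p^(k+1))`. -/
theorem stmt7 (p : ℕ) [hp : Fact p.Prime] (hodd : Odd p)
    (m e : ℕ) (hm : 0 < m) (he1 : 1 ≤ e) (he2 : e ≤ padicValNat p m)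
    (δ : ℤ_[p]ˣ) (ε : ℕ → ℤ_[p])
    (hε1 : (p : ℤ_[p]) ^ (padicValNat p m - e) * ε 1 =
      -(δ : ℤ_[p]) * ((m / p).choose (p ^ (e - 1)) : ℤ_[p]))
    (hεrec : ∀ k, 1 ≤ k → k ≤ e - 1 →
      ε (k + 1) = -ε k * (1 + (((m - p ^ e) / p).choose (p ^ (e - k - 1)) : ℤ_[p])))
    (hme : p ^ e < m) (hval : e < padicValNat p (m - p ^ e)) :
    ∀ k, 1 ≤ k → k ≤ e - 1 →
      ε (k + 1) + ε k ∈ Ideal.span {(p : ℤ_[p]) ^ (k + 1)} := by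
  intro k hk1 hk2
  have hdvd : p ^ (e + 1) ∣ m - p ^ e := (pow_dvd_pow p hval).trans pow_padicValNat_dvd
  have hquot : p ^ (e - k - 1 + (k + 1)) ∣ (m - p ^ e) / p := by
    rw [show e - k - 1 + (k + 1) = e by omega]
    exact Nat.dvd_div_of_mul_dvd (by rwa [← pow_succ'])
  have hchoose := pow_dvd_choose_pow_of_pow_add_dvd hp.out.pos hquot
  rw [Ideal.mem_span_singleton, hεrec k hk1 hk2,
    show ∀ x y : ℤ_[p], -x * (1 + y) + x = -x * y by intros; ring]
  exact Dvd.dvd.mul_left (by exact_mod_cast Nat.cast_dvd_cast (α := ℤ_[p]) hchoose) _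
end

section
/- Let p be a prime, e a positive integer, and M a positive integer divisible by p^{e−1}. Let R be a commutative ring and x, t, β ∈ R. Then (x + β^{p(p−1)}·t)^M − x^M − C(M, p^{e−1})·β^{p^e(p−1)}·x^{M − p^{e−1}}·t^{p^{e−1}} lies in the ideal of R generated by β^{p^{e+1}−1} and the element p^{val_p(M)−e+2}·1. -/
/-- If `p ^ v ∣ n` and `p ^ (a + 1) ∤ k` then `p ^ (v - a)` divides `n.choose k`. -/
theorem prime_pow_dvd_choose_of_not_dvd {p n k v a : ℕ} (hp : p.Prime) (hv : p ^ v ∣ n)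
    (hk : ¬ p ^ (a + 1) ∣ k) : p ^ (v - a) ∣ n.choose k := by
  have hk0 : k ≠ 0 := by
    rintro rfl
    exact hk (dvd_zero _)
  rcases Nat.eq_zero_or_pos n with rfl | hn
  · rw [Nat.choose_eq_zero_of_lt (Nat.pos_of_ne_zero hk0)]
    exact dvd_zero _
  obtain ⟨b, m, hm, rfl⟩ := Nat.exists_eq_pow_mul_and_not_dvd hk0 p hp.ne_one
  have hb : b ≤ a := by
    by_contra! h
    exact hk ((pow_dvd_pow p h).mul_right m)
  have hmul : n * (n - 1).choose (p ^ b * m - 1) = n.choose (p ^ b * m) * (p ^ b * m) := by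
    have h := Nat.add_one_mul_choose_eq (n - 1) (p ^ b * m - 1)
    rwa [Nat.sub_add_cancel hn, Nat.sub_add_cancel (Nat.pos_of_ne_zero hk0)] at h
  rcases le_or_gt v a with hva | hva
  · simp [Nat.sub_eq_zero_of_le hva]
  have hdvd : p ^ b * p ^ (v - b) ∣ p ^ b * (m * n.choose (p ^ b * m)) := by
    rw [← pow_add, Nat.add_sub_cancel' (hb.trans hva.le)]
    refine (hv.mul_right ((n - 1).choose (p ^ b * m - 1))).trans (dvd_of_eq ?_)
    rw [hmul]
    ring
  have hcop : Nat.Coprime (p ^ (v - b)) m :=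
    Nat.Coprime.pow_left _ ((Nat.Prime.coprime_iff_not_dvd hp).2 hm)
  exact (pow_dvd_pow p (Nat.sub_le_sub_left hb v)).trans
    (hcop.dvd_of_dvd_mul_left (Nat.dvd_of_mul_dvd_mul_left (pow_pos hp.pos b) hdvd))

/-- Let `p` be a prime, `e` a positive integer, `M` a positive integer divisible by
`p^(e-1)`, `R` a commutative ring and `x t β : R`. Then
`(x + β^(p(p-1)) t)^M - x^M - C(M, p^(e-1)) β^(p^e (p-1)) x^(M - p^(e-1)) t^(p^(e-1))`
lies in the ideal generated by `β^(p^(e+1) - 1)` and `p^(val_p(M) - e + 2)`. -/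
theorem stmt8 (p e M : ℕ) (hp : p.Prime) (he : 0 < e) (hM : 0 < M)
    (hdvd : p ^ (e - 1) ∣ M) {R : Type*} [CommRing R] (x t β : R) :
    (x + β ^ (p * (p - 1)) * t) ^ M - x ^ M -
        (M.choose (p ^ (e - 1)) : R) * β ^ (p ^ e * (p - 1)) * x ^ (M - p ^ (e - 1)) *
          t ^ (p ^ (e - 1)) ∈
      Ideal.span {β ^ (p ^ (e + 1) - 1), (p : R) ^ (padicValNat p M + 2 - e)} := by
  have hqpos : 0 < p ^ (e - 1) := pow_pos hp.pos _
  have hqM : p ^ (e - 1) ≤ M := Nat.le_of_dvd hM hdvd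
  have hpe : p ^ e = p ^ (e - 1) * p := by rw [← pow_succ, Nat.sub_add_cancel he]
  have hexp : p * (p - 1) * p ^ (e - 1) = p ^ e * (p - 1) := by rw [hpe]; ring
  rw [add_comm x, add_pow,
    ← Finset.add_sum_erase _ _ (Finset.mem_range.2 (Nat.succ_pos M)),
    ← Finset.add_sum_erase _ _ (Finset.mem_erase.2
      ⟨hqpos.ne', Finset.mem_range.2 (Nat.lt_succ_of_le hqM)⟩)]
  have hsplit (S : R) : (β ^ (p * (p - 1)) * t) ^ 0 * x ^ (M - 0) * (M.choose 0 : R) +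
      ((β ^ (p * (p - 1)) * t) ^ p ^ (e - 1) * x ^ (M - p ^ (e - 1)) *
        (M.choose (p ^ (e - 1)) : R) + S) - x ^ M -
      (M.choose (p ^ (e - 1)) : R) * β ^ (p ^ e * (p - 1)) * x ^ (M - p ^ (e - 1)) *
        t ^ (p ^ (e - 1)) = S := by
    rw [mul_pow _ _ (p ^ (e - 1)), ← pow_mul β, hexp]
    simp only [pow_zero, Nat.sub_zero, Nat.choose_zero_right, Nat.cast_one]
    ring
  rw [hsplit]
  refine Ideal.sum_mem _ fun k hk ↦ ?_
  obtain ⟨hkq, hk0, -⟩ : k ≠ p ^ (e - 1) ∧ k ≠ 0 ∧ k ∈ Finset.range (M + 1) := by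
    simpa only [Finset.mem_erase] using hk
  by_cases hqk : p ^ (e - 1) ∣ k
  · refine Ideal.mem_of_dvd _ ?_ (Ideal.subset_span (Set.mem_insert _ _))
    rw [mul_pow, ← pow_mul, mul_assoc, mul_assoc]
    refine (pow_dvd_pow β ?_).mul_right _
    obtain ⟨c, rfl⟩ := hqk
    have hc : 2 ≤ c := by
      rcases c with _ | _ | c
      · simp at hk0
      · simp at hkq
      · omega
    obtain ⟨r, rfl⟩ : ∃ r, p = r + 2 := Nat.exists_eq_add_of_le' hp.two_le
    calc (r + 2) ^ (e + 1) - 1 ≤ (r + 2) ^ (e + 1) := Nat.sub_le _ _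
      _ = (r + 2) ^ e * (r + 2) := pow_succ _ _
      _ ≤ (r + 2) ^ e * ((r + 1) * c) := Nat.mul_le_mul_left _ (by nlinarith)
      _ = (r + 2) * (r + 2 - 1) * ((r + 2) ^ (e - 1) * c) := by
        rw [hpe, Nat.add_sub_assoc (by norm_num)]
        ring
  · have he2 : 2 ≤ e := by
      by_contra! h
      obtain rfl : e = 1 := by omega
      simp at hqk
    have hchoose : p ^ (padicValNat p M + 2 - e) ∣ M.choose k := by
      have h := prime_pow_dvd_choose_of_not_dvd (a := e - 2) hp
        (pow_padicValNat_dvd (p := p) (n := M)) (by rwa [show e - 2 + 1 = e - 1 by omega])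
      rwa [show padicValNat p M - (e - 2) = padicValNat p M + 2 - e by omega] at h
    refine Ideal.mem_of_dvd _ ?_ (Ideal.subset_span (Set.mem_insert_of_mem _ rfl))
    refine Dvd.dvd.mul_left ?_ _
    exact_mod_cast Nat.cast_dvd_cast (α := R) hchoose
end

section
/- Let p be an odd prime and m a positive integer, and set v = val_p(m). Let R be a commutative ring and x, t, b, β ∈ R. Then (x + p·t + β^{p−2}·b)^m − x^m − m·β^{p−2}·x^{m−1}·b lies in the ideal of R generated by β^{p−1} and the element p^{v+1}·1. -/
/-- Let `p` be an odd prime, `m` a positive integer, `v = val_p(m)`, `R` a commutative ring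
and `x t b β : R`. Then `(x + p t + β^(p-2) b)^m - x^m - m β^(p-2) x^(m-1) b` lies in the
ideal generated by `β^(p-1)` and `p^(v+1)`. -/
theorem stmt9 (p : ℕ) (hp : p.Prime) (hodd : Odd p) (m : ℕ) (hm : 0 < m)
    {R : Type*} [CommRing R] (x t b β : R) :
    (x + (p : R) * t + β ^ (p - 2) * b) ^ m - x ^ m -
        (m : R) * β ^ (p - 2) * x ^ (m - 1) * b ∈
      Ideal.span {β ^ (p - 1), (p : R) ^ (padicValNat p m + 1)} := by
  have hp3 : 3 ≤ p := by
    have := hp.two_le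
    rcases hodd with ⟨k, hk⟩
    omega
  obtain ⟨k, hk⟩ := Polynomial.powAddExpansion (x + (p : R) * t) (β ^ (p - 2) * b) m
  have hsub : (p : R) ∣ (x + (p : R) * t) - x := ⟨t, by ring⟩
  obtain ⟨n, hn⟩ : p ^ padicValNat p m ∣ m := pow_padicValNat_dvd
  have hpow : (p : R) ^ (padicValNat p m + 1) ∣ (x + (p : R) * t) ^ m - x ^ m := by
    have h := (dvd_sub_pow_of_dvd_sub hsub (padicValNat p m)).trans
      (sub_dvd_pow_sub_pow _ _ n)
    rwa [← pow_mul, ← pow_mul, ← hn] at h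
  obtain ⟨c, hc⟩ := hpow
  obtain ⟨d, hd⟩ := hsub.trans (sub_dvd_pow_sub_pow _ _ (m - 1))
  have hcast : (m : R) = (p : R) ^ padicValNat p m * n := by exact_mod_cast congrArg Nat.cast hn
  have hβ : (β ^ (p - 2)) ^ 2 = β ^ (p - 1) * β ^ (p - 3) := by
    rw [← pow_mul, ← pow_add]
    congr 1
    omega
  refine Ideal.mem_span_pair.2
    ⟨k * β ^ (p - 3) * b ^ 2, c + n * d * (β ^ (p - 2) * b), ?_⟩
  rw [hk]
  linear_combination (-1 : R) * hc - (m : R) * (β ^ (p - 2) * b) * hd - k * b ^ 2 * hβ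
    - (p : R) * d * (β ^ (p - 2) * b) * hcast
end

section
/- Let P = ∏_p ℤ_p be the product over all primes p of the rings of p-adic integers, regarded as a ℤ-module, and let φ : ℚ × P → ℚ ⊗_ℤ P be the ℤ-linear map defined by φ(q, a) = 1 ⊗ a − q·(1 ⊗ 1), where 1 ∈ P is the element all of whose components are 1. Then φ is surjective, and its kernel is exactly the image of the ℤ-linear map ℤ → ℚ × P sending n to (n, n·1); in other words, the sequence 0 → ℤ → ℚ × ∏_p ℤ_p → ℚ ⊗_ℤ ∏_p ℤ_p → 0 is exact (the arithmetic fracture square for ℤ). -/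
open TensorProduct

instance (p : Nat.Primes) : Fact (Nat.Prime (p : ℕ)) := ⟨p.2⟩

/-- A prime `q` splits every element of `∏ p, ℤ_p` into an integer and a multiple of `q`. -/
lemma exists_eq_intCast_add_prime_mul (q : Nat.Primes)
    (a : ∀ p : Nat.Primes, ℤ_[(p : ℕ)]) :
    ∃ (n : ℤ) (b : ∀ p : Nat.Primes, ℤ_[(p : ℕ)]), a = n + (q : ℕ) * b := by
  have hmem := PadicInt.sub_zmodRepr_mem (a q)
  rw [PadicInt.maximalIdeal_eq_span_p, Ideal.mem_span_singleton] at hmem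
  have hdvd : ∀ p : Nat.Primes, ∃ c : ℤ_[(p : ℕ)],
      a p - ((a q).zmodRepr : ℤ_[(p : ℕ)]) = (q : ℕ) * c := by
    intro p
    by_cases h : p = q
    · subst h
      exact hmem
    · have hunit : IsUnit ((q : ℕ) : ℤ_[(p : ℕ)]) := by
        rw [PadicInt.isUnit_iff, PadicInt.norm_natCast_eq_one_iff]
        exact (Nat.coprime_primes p.2 q.2).2 fun e => h (Subtype.ext e)
      exact hunit.dvd
  choose b hb using hdvd
  refine ⟨(a q).zmodRepr, b, funext fun p => ?_⟩
  simpa [sub_eq_iff_eq_add'] using hb p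

/-- The integers surject onto every quotient of `∏ p, ℤ_p` by a nonzero integer. -/
lemma exists_eq_intCast_add_mul {d : ℕ} (hd : d ≠ 0) (a : ∀ p : Nat.Primes, ℤ_[(p : ℕ)]) :
    ∃ (n : ℤ) (b : ∀ p : Nat.Primes, ℤ_[(p : ℕ)]), a = n + d * b := by
  induction d using Nat.recOnMul generalizing a with
  | zero => exact absurd rfl hd
  | one => exact ⟨0, a, by simp⟩
  | prime q hq => exact exists_eq_intCast_add_prime_mul ⟨q, hq⟩ a
  | mul d e ihd ihe =>
    obtain ⟨n, b, rfl⟩ := ihd (left_ne_zero_of_mul hd) a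
    obtain ⟨m, c, rfl⟩ := ihe (right_ne_zero_of_mul hd) b
    exact ⟨n + d * m, c, by push_cast; ring⟩

/-- The natural map `ℚ ⊗ ∏ p, ℤ_p → ℚ_p`. -/
noncomputable def rationalTensorToPadic (p : Nat.Primes) :
    ℚ ⊗[ℤ] (∀ p : Nat.Primes, ℤ_[(p : ℕ)]) →ₗ[ℤ] ℚ_[(p : ℕ)] :=
  TensorProduct.lift <| LinearMap.mk₂ ℤ (fun q a => (q : ℚ_[(p : ℕ)]) * (a p : ℚ_[(p : ℕ)]))
    (fun _ _ _ => by push_cast; ring) (fun _ _ _ => by simp [mul_assoc])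
    (fun _ _ _ => by simp [mul_add]) (fun _ _ _ => by simp [mul_left_comm])

lemma rationalTensorToPadic_tmul (p : Nat.Primes) (q : ℚ) (a : ∀ p : Nat.Primes, ℤ_[(p : ℕ)]) :
    rationalTensorToPadic p (q ⊗ₜ a) = (q : ℚ_[(p : ℕ)]) * (a p : ℚ_[(p : ℕ)]) := rfl

/-- A rational number that is `p`-integral for every prime `p` is an integer. -/
lemma Rat.den_eq_one_of_forall_padic_norm_le_one {q : ℚ}
    (h : ∀ p : Nat.Primes, ‖(q : ℚ_[(p : ℕ)])‖ ≤ 1) : q.den = 1 := by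
  by_contra hne
  obtain ⟨p, hp, hdvd⟩ := Nat.exists_prime_and_dvd hne
  have : Fact p.Prime := ⟨hp⟩
  have hunit := PadicInt.isUnit_den (p := p) q (h ⟨p, hp⟩)
  rw [PadicInt.isUnit_iff, PadicInt.norm_natCast_eq_one_iff] at hunit
  exact hp.coprime_iff_not_dvd.1 hunit hdvd

/-- The arithmetic fracture square for `ℤ`: the sequence
`0 → ℤ → ℚ × ∏_p ℤ_p → ℚ ⊗_ℤ ∏_p ℤ_p → 0` is exact, where the second map is
`n ↦ (n, n·1)` and the third map is `(q, a) ↦ 1 ⊗ a - q ⊗ 1`. -/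
theorem stmt10
    (ι : ℤ →ₗ[ℤ] ℚ × (∀ p : Nat.Primes, ℤ_[(p : ℕ)]))
    (hι : ∀ n : ℤ, ι n = ((n : ℚ), (n : ∀ p : Nat.Primes, ℤ_[(p : ℕ)])))
    (φ : (ℚ × (∀ p : Nat.Primes, ℤ_[(p : ℕ)])) →ₗ[ℤ]
      ℚ ⊗[ℤ] (∀ p : Nat.Primes, ℤ_[(p : ℕ)]))
    (hφ : ∀ (q : ℚ) (a : ∀ p : Nat.Primes, ℤ_[(p : ℕ)]),
      φ (q, a) = (1 : ℚ) ⊗ₜ[ℤ] a - q ⊗ₜ[ℤ] (1 : ∀ p : Nat.Primes, ℤ_[(p : ℕ)])) :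
    Function.Injective ι ∧ Function.Surjective φ ∧
      LinearMap.ker φ = LinearMap.range ι := by
  have tmul_intCast_mul (n : ℤ) (q : ℚ) (a : ∀ p : Nat.Primes, ℤ_[(p : ℕ)]) :
      q ⊗ₜ[ℤ] ((n : ∀ p : Nat.Primes, ℤ_[(p : ℕ)]) * a) = (q * n) ⊗ₜ[ℤ] a := by
    rw [← zsmul_eq_mul, TensorProduct.tmul_smul, TensorProduct.smul_tmul', zsmul_eq_mul, mul_comm]
  refine ⟨fun m n h => ?_, LinearMap.range_eq_top.1 (top_unique fun x _ => ?_), ?_⟩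
  · rw [hι, hι] at h
    exact Int.cast_injective (congrArg Prod.fst h)
  · induction x with
    | zero => exact zero_mem _
    | add x y hx hy => exact add_mem (hx trivial) (hy trivial)
    | tmul q a =>
      obtain ⟨n, b, rfl⟩ := exists_eq_intCast_add_mul q.den_nz a
      refine ⟨(-(q * n), q.num * b), ?_⟩
      have hb := tmul_intCast_mul q.den q b
      have hn := tmul_intCast_mul n q 1
      rw [Int.cast_natCast, Int.cast_natCast, Rat.mul_den_eq_num] at hb
      rw [mul_one] at hn
      rw [hφ, tmul_intCast_mul, TensorProduct.tmul_add, hb, hn, one_mul, TensorProduct.neg_tmul,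
        sub_neg_eq_add, add_comm]
  · ext ⟨q, a⟩
    rw [LinearMap.mem_ker, LinearMap.mem_range, hφ, sub_eq_zero]
    constructor
    · intro h
      have hcomp (p : Nat.Primes) : (a p : ℚ_[(p : ℕ)]) = q := by
        simpa [rationalTensorToPadic_tmul] using congrArg (rationalTensorToPadic p) h
      have hq : (q.num : ℚ) = q := Rat.coe_int_num_of_den_eq_one <|
        Rat.den_eq_one_of_forall_padic_norm_le_one fun p => hcomp p ▸ (a p).2
      refine ⟨q.num, ?_⟩
      rw [hι, hq]
      refine Prod.ext rfl (funext fun p => Subtype.ext ?_)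
      have hp := hcomp p
      rw [← hq] at hp
      simpa using hp.symm
    · rintro ⟨n, hn⟩
      rw [hι, Prod.mk.injEq] at hn
      obtain ⟨rfl, rfl⟩ := hn
      simpa using tmul_intCast_mul n 1 1
end
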